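/- T*_ord, the theory of dense linear orders without endpoints, is ⊲*_λ-maximal for every cardinal λ > ℵ₀. -/

import Mathlib

open FirstOrder FirstOrder.Language Cardinal

namespace SopPaper

/-- A first-order formula with parameters from `M`, in free variables indexed by `Fin m`. -/
structure ParamFormula (L : FirstOrder.Language.{0, 0}) (M : Type*) [L.Structure M] (m : ℕ) where
  k : ℕ
  toFormula : L.Formula (Fin m ⊕ Fin k)
  par : Fin k → M

/-- Realization of a formula with parameters at a tuple `e`. -/
def ParamFormula.Realize {L : FirstOrder.Language.{0, 0}} {M : Type*} [L.Structure M] {m : ℕ}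
    (ψ : ParamFormula L M m) (e : Fin m → M) : Prop :=
  ψ.toFormula.Realize (Sum.elim e ψ.par)

/-- `N` is a `lam`-saturated `L`-structure: every 1-type over a parameter set of
cardinality `< lam` which is finitely satisfiable in `N` is realized in `N`. -/
def IsSaturatedAt (L : FirstOrder.Language.{0, 0}) (N : Type) (S : L.Structure N)
    (lam : Cardinal.{0}) : Prop :=
  ∀ A : Set N, #A < lam →
    ∀ p : Set (@ParamFormula L N S 1),
      (∀ ψ ∈ p, ∀ j, ψ.par j ∈ A) →
      (∀ s : Finset (@ParamFormula L N S 1), ↑s ⊆ p →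
        ∃ e : Fin 1 → N, ∀ ψ ∈ s, ψ.Realize e) →
      ∃ e : Fin 1 → N, ∀ ψ ∈ p, ψ.Realize e

/-- An interpretation (syntactic data) of the language `L₁` in the language `L₀`:
a dimension, a domain formula, an equality formula, and formulas interpreting each
relation symbol and (the graph of) each function symbol. -/
structure Interpretation (L₀ L₁ : FirstOrder.Language.{0, 0}) where
  d : ℕ
  dom : L₀.Formula (Fin d)
  eqf : L₀.Formula (Fin d ⊕ Fin d)
  rel : ∀ n, L₁.Relations n → L₀.Formula (Fin n × Fin d)
  func : ∀ n, L₁.Functions n → L₀.Formula ((Fin n × Fin d) ⊕ Fin d)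

variable {L₀ L₁ L₂ : FirstOrder.Language.{0, 0}}

/-- The domain of the interpretation `I` in an `L₀`-structure `M`. -/
def Interpretation.Dom (I : Interpretation L₀ L₁) (M : Type) [L₀.Structure M] : Type :=
  {a : Fin I.d → M // I.dom.Realize a}

/-- The `L₁`-structure `N` is (isomorphic to) the model `M^[I]` interpreted by `I` inside the
`L₀`-structure `M`, as witnessed by the projection `g` from the domain of `I` in `M` onto `N`. -/
def Interpretation.Represents (I : Interpretation L₀ L₁) (M : Type) [L₀.Structure M]
    (N : Type) (S : L₁.Structure N) (g : I.Dom M → N) : Prop :=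
  Function.Surjective g ∧
  (∀ a b : I.Dom M, g a = g b ↔ I.eqf.Realize (Sum.elim a.1 b.1)) ∧
  (∀ (n : ℕ) (r : L₁.Relations n) (f : Fin n → I.Dom M),
      S.RelMap r (fun i => g (f i)) ↔ (I.rel n r).Realize fun p => (f p.1).1 p.2) ∧
  (∀ (n : ℕ) (F : L₁.Functions n) (f : Fin n → I.Dom M) (b : I.Dom M),
      S.funMap F (fun i => g (f i)) = g b ↔
        (I.func n F).Realize (Sum.elim (fun p => (f p.1).1 p.2) b.1))

/-- `I` is an interpretation of the theory `T₁` in the theory `T₀`: in every model of `T₀`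
the interpreted structure exists and is a model of `T₁`. -/
def Interpretation.InterpretsIn (I : Interpretation L₀ L₁) (T₀ : L₀.Theory)
    (T₁ : L₁.Theory) : Prop :=
  ∀ M : Theory.ModelType.{0, 0, 0} T₀,
    ∃ (N : Theory.ModelType.{0, 0, 0} T₁) (g : I.Dom M → N),
      I.Represents M N inferInstance g

/-- The cardinality of a theory (together with its language), `|T|`. -/
def theoryCard {L : FirstOrder.Language.{0, 0}} (T : L.Theory) : Cardinal.{0} :=
  L.card + #T + ℵ₀

/-- Any model of `T₁` and any model of `T₂` occur (up to elementary equivalence) jointly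
interpreted in a single model of `T₀`; this is the extra demand made on the witnessing theory
when `T₁`, `T₂` are not necessarily complete. -/
def JointModels (T₀ : L₀.Theory) (T₁ : L₁.Theory) (T₂ : L₂.Theory)
    (I₁ : Interpretation L₀ L₁) (I₂ : Interpretation L₀ L₂) : Prop :=
  ∀ (A₁ : Theory.ModelType.{0, 0, 0} T₁) (A₂ : Theory.ModelType.{0, 0, 0} T₂),
    ∃ (M : Theory.ModelType.{0, 0, 0} T₀) (N₁ : Theory.ModelType.{0, 0, 0} T₁)
      (g₁ : I₁.Dom M → N₁) (N₂ : Theory.ModelType.{0, 0, 0} T₂) (g₂ : I₂.Dom M → N₂),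
      I₁.Represents M N₁ inferInstance g₁ ∧ I₂.Represents M N₂ inferInstance g₂ ∧
      (N₁ ≅[L₁] A₁) ∧ (N₂ ≅[L₂] A₂)

/-- The saturation-transfer property: whenever `M ⊨ T₀` is `kap`-saturated (no demand when
`kap = 0`) and the interpreted model `M^[I₂]` is `lam`-saturated, the interpreted model
`M^[I₁]` is `mu`-saturated. -/
def TransferClause (T₀ : L₀.Theory) (I₁ : Interpretation L₀ L₁) (I₂ : Interpretation L₀ L₂)
    (lam mu kap : Cardinal.{0}) : Prop :=
  ∀ M : Theory.ModelType.{0, 0, 0} T₀,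
    (kap = 0 ∨ IsSaturatedAt L₀ M inferInstance kap) →
    ∀ (N₁ : Type) (S₁ : L₁.Structure N₁) (g₁ : I₁.Dom M → N₁)
      (N₂ : Type) (S₂ : L₂.Structure N₂) (g₂ : I₂.Dom M → N₂),
      I₁.Represents M N₁ S₁ g₁ → I₂.Represents M N₂ S₂ g₂ →
      IsSaturatedAt L₂ N₂ S₂ lam → IsSaturatedAt L₁ N₁ S₁ mu

/-- `T₁ ⊲*_{λ,μ,κ} T₂`. -/
def TriangleStar (T₁ : L₁.Theory) (T₂ : L₂.Theory) (lam mu kap : Cardinal.{0}) : Prop :=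
  ∃ (L₀ : FirstOrder.Language.{0, 0}) (T₀ : L₀.Theory)
    (I₁ : Interpretation L₀ L₁) (I₂ : Interpretation L₀ L₂),
    theoryCard T₀ ≤ theoryCard T₁ + theoryCard T₂ ∧
    I₁.InterpretsIn T₀ T₁ ∧ I₂.InterpretsIn T₀ T₂ ∧
    JointModels T₀ T₁ T₂ I₁ I₂ ∧
    TransferClause T₀ I₁ I₂ lam mu kap

/-- `T` is `⊲*_λ`-maximal: `T' ⊲*_λ T` for every theory `T'` with `|T'| < λ`. -/
def TriangleStarMaximal {L : FirstOrder.Language.{0, 0}} (T : L.Theory)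
    (lam : Cardinal.{0}) : Prop :=
  ∀ (L' : FirstOrder.Language.{0, 0}) (T' : L'.Theory), theoryCard T' < lam →
    TriangleStar T' T lam lam 0

/-- The language of trees: a single binary relation `<`. -/
inductive TreeRel : ℕ → Type
  | lt : TreeRel 2

/-- The language of trees. -/
def Ltr : FirstOrder.Language.{0, 0} := ⟨fun _ => Empty, TreeRel⟩

/-- The tree order of an `Ltr`-structure. -/
def treeLt {M : Type*} [Ltr.Structure M] (x y : M) : Prop :=
  Structure.RelMap (L := Ltr) (TreeRel.lt : Ltr.Relations 2) ![x, y]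

/-- `M` is a tree: `<` is a (strict) partial order in which the predecessors of any element
are linearly ordered. -/
def IsTreeStructure (M : Type*) [Ltr.Structure M] : Prop :=
  (∀ x : M, ¬ treeLt x x) ∧
  (∀ x y z : M, treeLt x y → treeLt y z → treeLt x z) ∧
  (∀ x y z : M, treeLt y x → treeLt z x → treeLt y z ∨ treeLt z y ∨ y = z)

/-- The theory of trees: all sentences true in every tree. -/
def Ttr : Ltr.Theory :=
  {σ | ∀ (M : Type) (S : Ltr.Structure M), Nonempty M → @IsTreeStructure M S →
    @Sentence.Realize Ltr M S σ}

/-- `T'` is the model completion of `T`. -/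
def IsModelCompletion {L : FirstOrder.Language.{0, 0}} (T T' : L.Theory) : Prop :=
  (∀ N : Theory.ModelType.{0, 0, 0} T', (N : Type) ⊨ T) ∧
  (∀ M : Theory.ModelType.{0, 0, 0} T, ∃ N : Theory.ModelType.{0, 0, 0} T',
      Nonempty ((M : Type) ↪[L] (N : Type))) ∧
  (∀ (M N : Theory.ModelType.{0, 0, 0} T') (f : (M : Type) ↪[L] (N : Type)) (k : ℕ)
      (ψ : L.Formula (Fin k)) (v : Fin k → M),
      ψ.Realize (f ∘ v) ↔ ψ.Realize v) ∧
  (∀ (A : Theory.ModelType.{0, 0, 0} T) (N₁ N₂ : Theory.ModelType.{0, 0, 0} T')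
      (f₁ : (A : Type) ↪[L] (N₁ : Type)) (f₂ : (A : Type) ↪[L] (N₂ : Type)) (k : ℕ)
      (ψ : L.Formula (Fin k)) (v : Fin k → A),
      ψ.Realize (f₁ ∘ v) ↔ ψ.Realize (f₂ ∘ v))


/-- The language of linear orders: a single binary relation `<`. -/
inductive OrdRel : ℕ → Type
  | lt : OrdRel 2

/-- The language of linear orders. -/
def Lord : FirstOrder.Language.{0, 0} := ⟨fun _ => Empty, OrdRel⟩

/-- The order of an `Lord`-structure. -/
def ordLt {M : Type*} [Lord.Structure M] (x y : M) : Prop :=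
  Structure.RelMap (L := Lord) (OrdRel.lt : Lord.Relations 2) ![x, y]

/-- `M` is a dense linear order without endpoints. -/
def IsDLOStructure (M : Type*) [Lord.Structure M] : Prop :=
  (∀ x : M, ¬ ordLt x x) ∧
  (∀ x y z : M, ordLt x y → ordLt y z → ordLt x z) ∧
  (∀ x y : M, ordLt x y ∨ ordLt y x ∨ x = y) ∧
  (∀ x y : M, ordLt x y → ∃ z : M, ordLt x z ∧ ordLt z y) ∧
  (∀ x : M, ∃ y : M, ordLt x y) ∧
  (∀ x : M, ∃ y : M, ordLt y x)

/-- `T*_ord`, the theory of dense linear orders without endpoints (the model completion of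
the theory of linear orders): all sentences true in every dense linear order without
endpoints. -/
def Tdlo : Lord.Theory :=
  {σ | ∀ (M : Type) (S : Lord.Structure M), Nonempty M → @IsDLOStructure M S →
    @Sentence.Realize Lord M S σ}

/-- A tree order `pre` (on the elements with `pre s s`, the nodes) compatible with an order `lt`,
whose nodes `s` carry conditions `con s` that become stronger along the tree.
These properties abstract finite sequences of conditions, ordered lexicographically by `lt`
and by extension by `pre`. -/
structure IsConditionTree {M : Type*} (lt pre con : M → M → Prop) : Prop where
  irrefl : ∀ x, ¬ lt x x
  trans : ∀ x y z, lt x y → lt y z → lt x z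
  pre_self : ∀ s t, pre s t → pre s s
  pre_trans : ∀ s t u, pre s t → pre t u → pre s u
  pre_antisymm : ∀ s t, pre s t → pre t s → s = t
  pre_total : ∀ s t u, pre s u → pre t u → pre s t ∨ pre t s
  pre_convex : ∀ s a b x, pre s a → pre s b → lt a x → lt x b → pre s x
  lt_of_pre : ∀ s t x, pre s t → s ≠ t → pre t x → lt s x
  exists_upper : ∀ s t, pre s t → s ≠ t → ∃ b, pre s b ∧ ∀ u, pre t u → lt u b
  con_anti : ∀ s t y, pre s t → con t y → con s y
  exists_append : ∀ s c, pre s s → ∃ t, pre s t ∧ pre t t ∧ ∀ y, con t y ↔ con s y ∧ con c y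
  exists_root : ∃ r, pre r r ∧ ∀ y, con r y
  exists_max : ∀ t c v, pre v t → (∃ y, con v y ∧ con c y) →
    ∃ u, pre u t ∧ (∃ y, con u y ∧ con c y) ∧
      ∀ w, pre w t → (∃ y, con w y ∧ con c y) → pre w u
  exists_meet : ∀ x t, ∃ u, pre u x ∧ pre u t ∧ ∀ v, pre v x → pre v t → pre v u

/-- Intervals given by fewer than `lam` lower and upper bounds are nonempty. -/
def FillsCuts {M : Type} (lt : M → M → Prop) (lam : Cardinal.{0}) : Prop :=
  ∀ (ι κ : Type) (a : ι → M) (b : κ → M), #ι < lam → #κ < lam → (∀ i j, lt (a i) (b j)) →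
    ∃ x, (∀ i, lt (a i) x) ∧ ∀ j, lt x (b j)

namespace IsConditionTree

variable {M : Type} {lt pre con : M → M → Prop}

theorem exists_finset_node (h : IsConditionTree lt pre con) (F : Finset M) :
    ∃ d, pre d d ∧ ∀ y, con d y ↔ ∀ c ∈ F, con c y := by
  classical
  induction F using Finset.induction_on with
  | empty =>
    obtain ⟨r, hr, hc⟩ := h.exists_root
    exact ⟨r, hr, by simp [hc]⟩
  | insert c F _ ih =>
    obtain ⟨d, hd, hc⟩ := ih
    obtain ⟨t, -, ht, hty⟩ := h.exists_append d c hd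
    exact ⟨t, ht, fun y => by simp [hty, hc, and_comm]⟩

/-- The node `s` is consistent with every finite subset of `Q`. -/
def Good (pre con : M → M → Prop) (Q : Set M) (s : M) : Prop :=
  pre s s ∧ ∀ F : Finset M, ↑F ⊆ Q → ∃ y, con s y ∧ ∀ c ∈ F, con c y

/-- A strictly increasing chain of fewer than `lam` good nodes has a good upper bound. -/
theorem exists_good_bound (h : IsConditionTree lt pre con) {lam : Cardinal.{0}}
    (hlam : ℵ₀ < lam) (hfill : FillsCuts lt lam) {Q : Set M} (hQ : #Q < lam)
    {ι : Type} [Nonempty ι] (hι : #ι < lam) (s : ι → M) (hs : ∀ i, Good pre con Q (s i))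
    (hchain : ∀ i j, pre (s i) (s j) ∨ pre (s j) (s i))
    (hnext : ∀ i, ∃ j, pre (s i) (s j) ∧ s i ≠ s j) :
    ∃ u, Good pre con Q u ∧ ∀ i, pre (s i) u := by
  classical
  choose n hn hne using hnext
  choose b hb hub using fun i => h.exists_upper (s i) (s (n i)) (hn i) (hne i)
  have hab : ∀ i j, lt (s i) (b j) := by
    intro i j
    obtain ⟨m, hi, hj⟩ : ∃ m, pre (s (n i)) (s m) ∧ pre (s (n j)) (s m) := by
      rcases hchain (n i) (n j) with hij | hij
      · exact ⟨n j, hij, (hs _).1⟩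
      · exact ⟨n i, (hs _).1, hij⟩
    exact h.trans _ _ _ (h.lt_of_pre _ _ _ (hn i) (hne i) hi) (hub _ _ hj)
  obtain ⟨t, hst, htb⟩ := hfill ι ι s b hι hι hab
  have hpt : ∀ i, pre (s i) t := fun i =>
    h.pre_convex _ _ _ _ (hs i).1 (hb i) (hst i) (htb i)
  let K := {F : Finset M // ↑F ⊆ Q}
  have hK : #K < lam := by
    have hle : #K ≤ #(Finset Q) := by
      refine mk_le_of_injective (f := fun F : K => F.1.subtype (· ∈ Q)) fun F G hFG => ?_
      ext x
      by_cases hx : x ∈ Q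
      · simpa using Finset.ext_iff.1 hFG ⟨x, hx⟩
      · exact ⟨fun hF => (hx (F.2 hF)).elim, fun hG => (hx (G.2 hG)).elim⟩
    refine hle.trans_lt ?_
    rcases finite_or_infinite Q with hfin | hinf
    · exact (lt_aleph0_of_finite _).trans hlam
    · rwa [mk_finset_of_infinite]
  choose d _ hd using fun F : K => h.exists_finset_node F.1
  obtain ⟨i₀⟩ := ‹Nonempty ι›
  have hcons : ∀ (i : ι) (F : K), ∃ y, con (s i) y ∧ con (d F) y := fun i F => by
    obtain ⟨y, hy, hF⟩ := (hs i).2 F.1 F.2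
    exact ⟨y, hy, (hd F y).2 hF⟩
  choose v hvt hvy hvmax using fun F : K => h.exists_max t (d F) (s i₀) (hpt i₀) (hcons i₀ F)
  have hsv : ∀ i F, pre (s i) (v F) := fun i F => hvmax F _ (hpt i) (hcons i F)
  obtain ⟨x, hsx, hxb⟩ := hfill ι (ι ⊕ K) s (Sum.elim b v) hι
    (by simpa using add_lt_of_lt hlam.le hι hK) (by
      rintro i (j | F)
      · exact hab i j
      · exact h.lt_of_pre _ _ _ (hn i) (hne i) (hsv _ F))
  have hpx : ∀ i, pre (s i) x := fun i =>
    h.pre_convex _ _ _ _ (hs i).1 (hb i) (hsx i) (hxb (Sum.inl i))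
  obtain ⟨u, hux, hut, humax⟩ := h.exists_meet x t
  refine ⟨u, ⟨h.pre_self _ _ hux, fun F hF => ?_⟩, fun i => humax _ (hpx i) (hpt i)⟩
  have huv : pre u (v ⟨F, hF⟩) := by
    rcases h.pre_total _ _ _ hut (hvt ⟨F, hF⟩) with huv | hvu
    · exact huv
    · by_cases heq : v ⟨F, hF⟩ = u
      · rw [heq]
        exact h.pre_self _ _ hux
      · exact (h.irrefl _ (h.trans _ _ _ (h.lt_of_pre _ _ _ hvu heq hux)
          (hxb (Sum.inr ⟨F, hF⟩)))).elim
  obtain ⟨y, hy, hdy⟩ := hvy ⟨F, hF⟩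
  exact ⟨y, h.con_anti _ _ _ huv hy, (hd _ y).1 hdy⟩

/-- If the order of a condition tree fills cuts, then every finitely satisfiable set of fewer
than `lam` conditions is satisfiable. -/
theorem exists_forall_con (h : IsConditionTree lt pre con) {lam : Cardinal.{0}}
    (hlam : ℵ₀ < lam) (hfill : FillsCuts lt lam) {Q : Set M} (hQ : #Q < lam)
    (hfin : ∀ F : Finset M, ↑F ⊆ Q → ∃ y, ∀ c ∈ F, con c y) : ∃ y, ∀ c ∈ Q, con c y := by
  classical
  let imp (s q : M) : Prop := ∀ y, con s y → con q y
  have imp_mono : ∀ {s t q}, pre s t → imp s q → imp t q := fun hst hq y hy =>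
    hq y (h.con_anti _ _ _ hst hy)
  let r (s t : {s // Good pre con Q s}) : Prop :=
    s = t ∨ (pre s.1 t.1 ∧ ∃ q ∈ Q, imp t.1 q ∧ ¬ imp s.1 q)
  have r_pre : ∀ {s t}, r s t → pre s.1 t.1 := by
    rintro s t (rfl | hst)
    · exact s.2.1
    · exact hst.1
  have : Nonempty {s // Good pre con Q s} := by
    obtain ⟨ρ, hρ, hcon⟩ := h.exists_root
    refine ⟨ρ, hρ, fun F hF => ?_⟩
    obtain ⟨y, hy⟩ := hfin F hF
    exact ⟨y, hcon y, hy⟩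
  obtain ⟨⟨s, hs⟩, hmax⟩ := exists_maximal_of_nonempty_chains_bounded (r := r) (by
    intro c hc hne
    by_cases htop : ∃ m ∈ c, ∀ a ∈ c, r a m
    · obtain ⟨m, -, hm⟩ := htop
      exact ⟨m, hm⟩
    push Not at htop
    have hup : ∀ a ∈ c, ∃ b ∈ c, pre a.1 b.1 ∧ ∃ q ∈ Q, imp b.1 q ∧ ¬ imp a.1 q := by
      intro a ha
      obtain ⟨b, hb, hba⟩ := htop a ha
      have hab : a ≠ b := fun hab => hba (Or.inl hab.symm)
      refine ⟨b, hb, ?_⟩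
      rcases hc ha hb hab with h1 | h1
      · exact h1.resolve_left hab
      · exact (hba h1).elim
    let ι := {q : Q // ∃ a ∈ c, imp a.1 q.1}
    choose s hsc hsq using fun i : ι => i.2
    have hι : #ι < lam := (mk_subtype_le _).trans_lt hQ
    have hchain : ∀ a ∈ c, ∀ b ∈ c, pre a.1 b.1 ∨ pre b.1 a.1 := by
      intro a ha b hb
      by_cases hab : a = b
      · exact Or.inl (hab ▸ a.2.1)
      · exact (hc ha hb hab).imp r_pre r_pre
    have hcof : ∀ a ∈ c, ∃ i, pre a.1 (s i).1 ∧ ∃ q ∈ Q, imp (s i).1 q ∧ ¬ imp a.1 q := by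
      intro a ha
      obtain ⟨b, hb, -, q, hq, hbq, haq⟩ := hup a ha
      let i : ι := ⟨⟨q, hq⟩, b, hb, hbq⟩
      refine ⟨i, ?_, q, hq, hsq i, haq⟩
      rcases hchain a ha _ (hsc i) with h1 | h1
      · exact h1
      · exact (haq (imp_mono h1 (hsq i))).elim
    have : Nonempty ι := by
      obtain ⟨a, ha⟩ := hne
      exact ⟨(hcof a ha).choose⟩
    obtain ⟨u, hu, hsu⟩ := h.exists_good_bound hlam hfill hQ hι (fun i => (s i).1)
      (fun i => (s i).2) (fun i j => hchain _ (hsc i) _ (hsc j)) (fun i => by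
        obtain ⟨j, hj, q, -, hq, hnq⟩ := hcof _ (hsc i)
        exact ⟨j, hj, fun heq => hnq (heq ▸ hq)⟩)
    refine ⟨⟨u, hu⟩, fun a ha => ?_⟩
    obtain ⟨i, hi, q, hq, hiq, haq⟩ := hcof a ha
    exact Or.inr ⟨h.pre_trans _ _ _ hi (hsu i), q, hq, imp_mono (hsu i) hiq, haq⟩) (by
    rintro a b c (rfl | ⟨hab, q, hq, hbq, haq⟩) hbc
    · exact hbc
    · exact Or.inr ⟨h.pre_trans _ _ _ hab (r_pre hbc), q, hq, imp_mono (r_pre hbc) hbq, haq⟩)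
  have himp : ∀ q ∈ Q, imp s q := by
    intro q hq
    by_contra hsq
    obtain ⟨t, hst, ht, hcon⟩ := h.exists_append s q hs.1
    have hgood : Good pre con Q t := by
      refine ⟨ht, fun F hF => ?_⟩
      obtain ⟨y, hy, hyF⟩ := hs.2 (insert q F) (by
        rw [Finset.coe_insert]
        exact Set.insert_subset hq hF)
      exact ⟨y, (hcon y).2 ⟨hy, hyF q (by simp)⟩, fun c hc => hyF c (by simp [hc])⟩
    have htq : imp t q := fun y hy => ((hcon y).1 hy).2
    exact hsq (imp_mono (r_pre (hmax ⟨t, hgood⟩ (Or.inr ⟨hst, q, hq, htq, hsq⟩))) htq)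
  obtain ⟨y, hy, -⟩ := hs.2 ∅ (by simp)
  exact ⟨y, fun q hq => himp q hq y hy⟩

end IsConditionTree

namespace FinsuppTree

variable {W : Type*} [LinearOrder W]

/-- The lexicographic order on finitely supported functions. -/
def Lt (s t : W →₀ ℚ) : Prop := toLex s < toLex t

/-- The nonnegative function `s` is an initial segment of `t`. -/
def Pre (s t : W →₀ ℚ) : Prop := 0 ≤ s ∧ ∀ w, s w ≠ 0 → ∀ v ≤ w, t v = s v

/-- All conditions in the support of `s` hold at `y`. -/
def Con {A : Type*} (cond : W → Set A) (π : (W →₀ ℚ) → A) (s y : W →₀ ℚ) : Prop :=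
  ∀ w, s w ≠ 0 → π y ∈ cond w

theorem lt_iff {s t : W →₀ ℚ} : Lt s t ↔ ∃ w, (∀ v < w, s v = t v) ∧ s w < t w := by
  simp [Lt, Finsupp.Lex.lt_iff]

theorem Pre.eq_of_ne {s t : W →₀ ℚ} (h : Pre s t) {w : W} (hw : s w ≠ 0) : t w = s w :=
  h.2 w hw w le_rfl

theorem Pre.support_subset {s t : W →₀ ℚ} (h : Pre s t) : s.support ⊆ t.support := by
  intro w hw
  rw [Finsupp.mem_support_iff] at hw ⊢
  rwa [h.eq_of_ne hw]

theorem Pre.trans {s t u : W →₀ ℚ} (hst : Pre s t) (htu : Pre t u) : Pre s u := by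
  refine ⟨hst.1, fun w hw v hv => ?_⟩
  rw [htu.2 w (by rwa [hst.eq_of_ne hw]) v hv, hst.2 w hw v hv]

theorem Pre.eq_of_support_subset {s t : W →₀ ℚ} (h : Pre s t) (hts : t.support ⊆ s.support) :
    s = t := by
  ext w
  by_cases hw : s w = 0
  · by_contra hne
    have hmem : w ∈ t.support := by
      rw [Finsupp.mem_support_iff]
      rintro h0
      exact hne (hw.trans h0.symm)
    exact Finsupp.mem_support_iff.1 (hts hmem) hw
  · exact (h.eq_of_ne hw).symm

theorem Pre.total {s t u : W →₀ ℚ} (hsu : Pre s u) (htu : Pre t u) : Pre s t ∨ Pre t s := by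
  by_contra! hcon
  obtain ⟨hst, hts⟩ := hcon
  simp only [Pre, hsu.1, htu.1, true_and] at hst hts
  push Not at hst hts
  obtain ⟨w, hw, w', hw', hne⟩ := hst
  obtain ⟨v, hv, v', hv', hne'⟩ := hts
  rcases le_total w v with hwv | hvw
  · exact hne (by rw [← hsu.2 w hw w' hw', htu.2 v hv w' (hw'.trans hwv)])
  · exact hne' (by rw [← htu.2 v hv v' hv', hsu.2 w hw v' (hv'.trans hvw)])

theorem Pre.refl_left {s t : W →₀ ℚ} (h : Pre s t) : Pre s s :=
  ⟨h.1, fun _ _ _ _ => rfl⟩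

/-- The first place where a proper initial segment differs. -/
theorem Pre.exists_first {s t : W →₀ ℚ} (h : Pre s t) (hne : s ≠ t) :
    ∃ w, (∀ v < w, s v = t v) ∧ s w = 0 ∧ t w ≠ 0 ∧ ∀ v, s v ≠ 0 → v < w := by
  have key : ∃ w, (∀ v < w, s v = t v) ∧ s w ≠ t w := by
    rcases lt_trichotomy (toLex s) (toLex t) with hlt | heq | hlt
    · obtain ⟨w, hw, hw'⟩ := lt_iff.1 hlt
      exact ⟨w, hw, hw'.ne⟩
    · exact (hne heq).elim
    · obtain ⟨w, hw, hw'⟩ := lt_iff.1 hlt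
      exact ⟨w, fun v hv => (hw v hv).symm, hw'.ne'⟩
  obtain ⟨w, hw, hw'⟩ := key
  have h0 : s w = 0 := by
    by_contra h0
    exact hw' (h.eq_of_ne h0).symm
  refine ⟨w, hw, h0, fun ht => hw' (h0.trans ht.symm), fun v hv => ?_⟩
  by_contra! hle
  exact hw' (h.2 v hv w hle).symm

theorem Pre.exists_max {t v : W →₀ ℚ} (P : (W →₀ ℚ) → Prop) (hv : Pre v t) (hP : P v) :
    ∃ u, Pre u t ∧ P u ∧ ∀ w, Pre w t → P w → Pre w u := by
  have hfin : {u | Pre u t ∧ P u}.Finite := by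
    refine Set.Finite.of_finite_image (f := Finsupp.support)
      ((t.support.powerset.finite_toSet).subset ?_) ?_
    · rintro _ ⟨u, ⟨hu, -⟩, rfl⟩
      simpa using hu.support_subset
    · rintro u ⟨hu, -⟩ w ⟨hw, -⟩ huw
      rcases hu.total hw with h | h
      · exact h.eq_of_support_subset huw.ge
      · exact (h.eq_of_support_subset huw.le).symm
  obtain ⟨u, ⟨hut, hPu⟩, hmax⟩ :=
    Set.exists_max_image _ (fun u : W →₀ ℚ => u.support.card) hfin ⟨v, hv, hP⟩
  refine ⟨u, hut, hPu, fun w hw hPw => ?_⟩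
  rcases hw.total hut with h | h
  · exact h
  · have hcard : w.support.card ≤ u.support.card := hmax w ⟨hw, hPw⟩
    have := h.eq_of_support_subset (Finset.eq_of_subset_of_card_le h.support_subset hcard).ge
    rw [this]
    exact hw.refl_left

theorem pre_convex {s a b x : W →₀ ℚ} (ha : Pre s a) (hb : Pre s b) (hax : Lt a x)
    (hxb : Lt x b) : Pre s x := by
  obtain ⟨i, hi, hi'⟩ := lt_iff.1 hax
  obtain ⟨j, hj, hj'⟩ := lt_iff.1 hxb
  refine ⟨ha.1, fun w hw v hv => ?_⟩
  have hab : ∀ v ≤ w, a v = b v := fun v hv => (ha.2 w hw v hv).trans (hb.2 w hw v hv).symm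
  have hwi : w < i := by
    by_contra! hiw
    rcases lt_trichotomy i j with hij | rfl | hji
    · exact hi'.ne ((hab i hiw).trans (hj i hij).symm)
    · exact (hi'.trans hj').ne (hab i hiw)
    · exact hj'.ne ((hi j hji).symm.trans (hab j (hji.le.trans hiw)))
  rw [← hi v (hv.trans_lt hwi), ha.2 w hw v hv]

theorem isConditionTree {A : Type*} (cond : W → Set A) (π : (W →₀ ℚ) → A)
    (hcond : ∀ (F : Finset W) (X : Set A), ∃ w, cond w = X ∧ ∀ v ∈ F, v < w) :
    IsConditionTree (Lt (W := W)) Pre (Con cond π) where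
  irrefl x := lt_irrefl (toLex x)
  trans x y z := lt_trans (a := toLex x)
  pre_self s t h := h.refl_left
  pre_trans s t u := Pre.trans
  pre_antisymm s t h h' := h.eq_of_support_subset h'.support_subset
  pre_total s t u := Pre.total
  pre_convex s a b x := pre_convex
  lt_of_pre s t x hst hne htx := by
    obtain ⟨w, hw, hs, ht, -⟩ := hst.exists_first hne
    refine lt_iff.2 ⟨w, fun v hv => ?_, ?_⟩
    · rw [htx.2 w ht v hv.le, hw v hv]
    · rw [htx.eq_of_ne ht, hs]
      exact lt_of_le_of_ne (htx.1 w) ht.symm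
  exists_upper s t hst hne := by
    obtain ⟨w, hw, hs, ht, hlt⟩ := hst.exists_first hne
    refine ⟨s + Finsupp.single w (t w + 1), ⟨hst.1, fun v hv v' hv' => ?_⟩, fun u htu => ?_⟩
    · simp [(hv'.trans_lt (hlt v hv)).ne]
    · refine lt_iff.2 ⟨w, fun v hv => ?_, ?_⟩
      · simp [htu.2 w ht v hv.le, hw v hv, hv.ne]
      · simp [htu.eq_of_ne ht, hs]
  con_anti s t y hst hy w hw := hy w (by rwa [hst.eq_of_ne hw])
  exists_append s c hs := by
    obtain ⟨w, hX, hlt⟩ := hcond s.support {a | ∀ v, c v ≠ 0 → a ∈ cond v}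
    have hpos : (0 : W →₀ ℚ) ≤ s + Finsupp.single w 1 :=
      add_nonneg hs.1 (Finsupp.single_nonneg.2 zero_le_one)
    have hlt' : ∀ v, s v ≠ 0 → v < w := fun v hv => hlt v (Finsupp.mem_support_iff.2 hv)
    have hsw : s w = 0 := by
      by_contra h
      exact lt_irrefl w (hlt' w h)
    refine ⟨s + Finsupp.single w 1, ⟨hs.1, fun v hv v' hv' => ?_⟩,
      ⟨hpos, fun _ _ _ _ => rfl⟩, fun y => ⟨fun hy => ⟨fun v hv => hy v ?_, ?_⟩, ?_⟩⟩
    · simp [(hv'.trans_lt (hlt' v hv)).ne]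
    · simpa [(hlt' v hv).ne] using hv
    · have := hy w (by simp [hsw])
      rwa [hX] at this
    · rintro ⟨hy, hc⟩ v hv
      by_cases hvw : v = w
      · subst hvw
        rw [hX]
        exact hc
      · exact hy v (by simpa [hvw] using hv)
  exists_root := ⟨0, ⟨le_rfl, fun _ _ _ _ => rfl⟩, fun y w hw => (hw rfl).elim⟩
  exists_max t c v hv hc := hv.exists_max _ hc
  exists_meet x t := by
    obtain ⟨u, hu, hux, hmax⟩ := Pre.exists_max (t := t) (v := 0) (fun u => Pre u x)
      ⟨le_rfl, fun w hw => (hw rfl).elim⟩ ⟨le_rfl, fun w hw => (hw rfl).elim⟩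
    exact ⟨u, hux, hu, fun v hvx hvt => hmax v hvt hvx⟩

theorem exists_gt [Nonempty W] (x : W →₀ ℚ) : ∃ y, Lt x y := by
  obtain ⟨w⟩ := ‹Nonempty W›
  exact ⟨x + Finsupp.single w 1, lt_iff.2 ⟨w, fun v hv => by simp [hv.ne], by simp⟩⟩

theorem exists_lt [Nonempty W] (x : W →₀ ℚ) : ∃ y, Lt y x := by
  obtain ⟨w⟩ := ‹Nonempty W›
  exact ⟨x - Finsupp.single w 1, lt_iff.2 ⟨w, fun v hv => by simp [hv.ne], by simp⟩⟩

theorem exists_between {x y : W →₀ ℚ} (h : Lt x y) : ∃ z, Lt x z ∧ Lt z y := by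
  obtain ⟨w, hw, hw'⟩ := lt_iff.1 h
  refine ⟨x + Finsupp.single w ((y w - x w) / 2),
    lt_iff.2 ⟨w, fun v hv => by simp [hv.ne], ?_⟩,
    lt_iff.2 ⟨w, fun v hv => by simp [hv.ne, hw v hv], ?_⟩⟩
  · simp only [Finsupp.add_apply, Finsupp.single_eq_same]
    linarith
  · simp only [Finsupp.add_apply, Finsupp.single_eq_same]
    linarith

end FinsuppTree

/-- Every nonempty type is an image of a condition tree that is densely ordered without endpoints
and has conditions for all its subsets. -/
theorem exists_conditionTree (A : Type) [Nonempty A] :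
    ∃ (U : Type) (lt pre con : U → U → Prop) (π : U → A), Nonempty U ∧
      Function.Surjective π ∧ IsConditionTree lt pre con ∧
      (∀ x y, lt x y ∨ lt y x ∨ x = y) ∧ (∀ x y, lt x y → ∃ z, lt x z ∧ lt z y) ∧
      (∀ x, ∃ y, lt x y) ∧ (∀ x, ∃ y, lt y x) ∧
      ∀ X : Set A, ∃ c, ∀ y, con c y ↔ π y ∈ X := by
  classical
  let _ : LinearOrder (A × Set A) := linearOrderOfSTO WellOrderingRel
  let W := ℕ ×ₗ (A × Set A)
  let cond : W → Set A := fun w => (ofLex w).2.2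
  let pt : A → (W →₀ ℚ) := fun a => Finsupp.single (toLex (0, (a, Set.univ))) 1
  have hpt : Function.Injective pt := by
    intro a b hab
    have h := (Finsupp.single_left_inj (one_ne_zero (α := ℚ))).1 hab
    simpa using congrArg (fun w : W => (ofLex w).2.1) h
  let π : (W →₀ ℚ) → A := Function.invFun pt
  have a₀ : A := Classical.arbitrary A
  have : Nonempty W := ⟨toLex (0, (a₀, Set.univ))⟩
  refine ⟨W →₀ ℚ, FinsuppTree.Lt, FinsuppTree.Pre, FinsuppTree.Con cond π, π, inferInstance,
    Function.invFun_surjective hpt, FinsuppTree.isConditionTree cond π ?_, ?_,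
    fun _ _ => FinsuppTree.exists_between, FinsuppTree.exists_gt, FinsuppTree.exists_lt, ?_⟩
  · intro F X
    obtain ⟨n, hn⟩ := (F.image fun w => (ofLex w).1).bddAbove
    refine ⟨toLex (n + 1, (a₀, X)), rfl, fun v hv => ?_⟩
    rw [Prod.Lex.lt_iff]
    exact Or.inl (Nat.lt_succ_of_le (hn (by simpa using ⟨_, hv, rfl⟩)))
  · intro x y
    rcases lt_trichotomy (toLex x) (toLex y) with h | h | h
    · exact Or.inl h
    · exact Or.inr (Or.inr h)
    · exact Or.inr (Or.inl h)
  · intro X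
    refine ⟨Finsupp.single (toLex (0, (a₀, X))) 1, fun y => ⟨fun h => ?_, fun h w hw => ?_⟩⟩
    · exact h (toLex (0, (a₀, X))) (by simp)
    · by_cases hw' : w = toLex (0, (a₀, X))
      · subst hw'
        exact h
      · exact (hw (by simp [hw'])).elim

/-- The relation symbols expanding a language: an equivalence relation, whose classes are the
elements of the interpreted model, and the three relations of a condition tree. -/
inductive ExtRel : ℕ → Type
  | eqv : ExtRel 2
  | lt : ExtRel 2
  | pre : ExtRel 2
  | con : ExtRel 2

/-- The relational language with symbols `ExtRel`. -/
def Lext : FirstOrder.Language.{0, 0} := ⟨fun _ => Empty, ExtRel⟩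

variable {L : FirstOrder.Language.{0, 0}}

/-- An additional symbol as a symbol of the expanded language. -/
def extSym (L : FirstOrder.Language.{0, 0}) (R : ExtRel 2) : (L.sum Lext).Relations 2 :=
  Sum.inr R

/-- The binary relation named by an additional symbol. -/
def extRel (L : FirstOrder.Language.{0, 0}) (R : ExtRel 2) {M : Type*}
    [(L.sum Lext).Structure M] (x y : M) : Prop :=
  Structure.RelMap (L := L.sum Lext) (extSym L R) ![x, y]

/-- The atomic formula `R xᵢ xⱼ` in bound variables. -/
def bdRel (L : FirstOrder.Language.{0, 0}) {α : Type} {n : ℕ} (R : ExtRel 2) (i j : Fin n) :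
    (L.sum Lext).BoundedFormula α n :=
  Relations.boundedFormula₂ (extSym L R)
    (Term.var (Sum.inr i)) (Term.var (Sum.inr j))

@[simp]
theorem realize_bdRel {α : Type} {n : ℕ} (R : ExtRel 2) (i j : Fin n) {M : Type}
    [(L.sum Lext).Structure M] (v : α → M) (xs : Fin n → M) :
    (bdRel L R i j).Realize v xs ↔ extRel L R (xs i) (xs j) := by
  rw [bdRel, BoundedFormula.realize_rel₂]
  rfl

/-- The atomic formula `R x y` in free variables. -/
def freeRel (L : FirstOrder.Language.{0, 0}) {α : Type} (R : ExtRel 2)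
    (s t : (L.sum Lext).Term α) : (L.sum Lext).Formula α :=
  Relations.formula₂ (extSym L R) s t

@[simp]
theorem realize_freeRel {α : Type} (R : ExtRel 2) (s t : (L.sum Lext).Term α) {M : Type}
    [(L.sum Lext).Structure M] (v : α → M) :
    (freeRel L R s t).Realize v ↔ extRel L R (s.realize v) (t.realize v) := by
  rw [freeRel, Formula.realize_rel₂]
  rfl

/-- The translation of `L`-formulas that replaces equality by the equivalence relation. -/
def translate {α : Type} : ∀ {n : ℕ}, L.BoundedFormula α n → (L.sum Lext).BoundedFormula α n
  | _, .falsum => .falsum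
  | _, .equal s t => Relations.boundedFormula₂ (extSym L ExtRel.eqv)
      (LHom.sumInl.onTerm s) (LHom.sumInl.onTerm t)
  | _, .rel R ts => .rel ((LHom.sumInl (L' := Lext)).onRelation R)
      fun i => LHom.sumInl.onTerm (ts i)
  | _, .imp φ ψ => .imp (translate φ) (translate ψ)
  | _, .all φ => .all (translate φ)

/-- `g` exhibits `N` as the quotient of `M` by the equivalence relation. -/
structure IsProjection (L : FirstOrder.Language.{0, 0}) {M N : Type}
    [(L.sum Lext).Structure M] [L.Structure N] (g : M → N) : Prop where
  surjective : Function.Surjective g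
  eqv_iff : ∀ x y, extRel L ExtRel.eqv x y ↔ g x = g y
  map_rel : ∀ (n : ℕ) (R : L.Relations n) (x : Fin n → M),
    Structure.RelMap ((LHom.sumInl (L' := Lext)).onRelation R) x ↔
      Structure.RelMap R (g ∘ x)
  map_fun : ∀ (n : ℕ) (F : L.Functions n) (x : Fin n → M),
    g (Structure.funMap ((LHom.sumInl (L' := Lext)).onFunction F) x) =
      Structure.funMap F (g ∘ x)

namespace IsProjection

variable {M N : Type} [(L.sum Lext).Structure M] [L.Structure N] {g : M → N}

theorem realize_onTerm (hg : IsProjection L g) {α : Type} (t : L.Term α) (v : α → M) :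
    g ((LHom.sumInl (L' := Lext).onTerm t).realize v) = t.realize (g ∘ v) := by
  induction t with
  | var => rfl
  | func F ts ih =>
    simp only [LHom.onTerm, Term.realize]
    refine (hg.map_fun _ F _).trans ?_
    congr 1
    funext i
    exact ih i

theorem realize_translate (hg : IsProjection L g) {α : Type} {n : ℕ} (φ : L.BoundedFormula α n)
    (v : α → M) (xs : Fin n → M) :
    (translate φ).Realize v xs ↔ φ.Realize (g ∘ v) (g ∘ xs) := by
  have hterm : ∀ {n : ℕ} (xs : Fin n → M) (t : L.Term (α ⊕ Fin n)),
      g ((LHom.sumInl (L' := Lext).onTerm t).realize (Sum.elim v xs)) =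
        t.realize (Sum.elim (g ∘ v) (g ∘ xs)) := fun xs t => by
    rw [hg.realize_onTerm, Sum.comp_elim]
  induction φ with
  | falsum => exact Iff.rfl
  | equal s t =>
    rw [translate, BoundedFormula.realize_rel₂]
    refine (hg.eqv_iff _ _).trans ?_
    rw [hterm, hterm]
    rfl
  | rel R ts =>
    refine (hg.map_rel _ R _).trans ?_
    rw [BoundedFormula.Realize]
    refine iff_of_eq (congrArg _ ?_)
    funext i
    exact hterm xs (ts i)
  | imp φ ψ ih₁ ih₂ =>
    exact imp_congr (ih₁ xs) (ih₂ xs)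
  | all φ ih =>
    refine (forall_congr' fun a => ih (Fin.snoc xs a)).trans ?_
    simp only [Fin.comp_snoc]
    exact (hg.surjective.forall (p := fun b => φ.Realize (g ∘ v) (Fin.snoc (g ∘ xs) b))).symm

theorem realize_translate_formula (hg : IsProjection L g) {α : Type} (φ : L.Formula α)
    (v : α → M) : Formula.Realize (translate φ) v ↔ φ.Realize (g ∘ v) := by
  rw [Formula.Realize, hg.realize_translate, Formula.Realize]
  exact iff_of_eq (congrArg _ (Subsingleton.elim _ _))

end IsProjection

/-- The inclusion of the language of orders. -/
def ordHom (L : FirstOrder.Language.{0, 0}) : Lord →ᴸ L.sum Lext where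
  onFunction := fun _ F => Empty.elim F
  onRelation := fun _ R => match R with
    | OrdRel.lt => extSym L ExtRel.lt

/-- The order structure of a structure in the expanded language. -/
abbrev ordStructure (L : FirstOrder.Language.{0, 0}) (M : Type) [(L.sum Lext).Structure M] :
    Lord.Structure M :=
  (ordHom L).reduct M

/-- The structures in the expanded language that consist of a model of `T` and a condition tree
ordered densely without endpoints that has conditions for all subsets of the model. -/
structure IsStandard (T : L.Theory) (U : Type) [(L.sum Lext).Structure U] : Prop where
  tree : IsConditionTree (M := U) (extRel L ExtRel.lt) (extRel L ExtRel.pre) (extRel L ExtRel.con)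
  dlo : @IsDLOStructure U (ordStructure L U)
  model : ∃ (A : Theory.ModelType.{0, 0, 0} T) (g : U → A), IsProjection L g ∧
    ∀ X : Set A, ∃ c : U, ∀ y, extRel L ExtRel.con c y ↔ g y ∈ X

/-- The theory of standard structures. -/
def standardTheory (T : L.Theory) : (L.sum Lext).Theory :=
  {σ | ∀ (U : Type) (_ : (L.sum Lext).Structure U), Nonempty U → IsStandard T U → U ⊨ σ}

section Models

variable {T : L.Theory} {M : Type} [(L.sum Lext).Structure M] [M ⊨ standardTheory T]

theorem realize_of_standard (T : L.Theory) [M ⊨ standardTheory T] {σ : (L.sum Lext).Sentence}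
    (h : ∀ (U : Type) (_ : (L.sum Lext).Structure U), IsStandard T U → U ⊨ σ) : M ⊨ σ :=
  (standardTheory T).realize_sentence_of_mem fun U S _ hU => h U S hU

theorem realize_formula_of_standard (T : L.Theory) [M ⊨ standardTheory T] {α : Type} [Finite α]
    {φ : (L.sum Lext).Formula α}
    (h : ∀ (U : Type) (_ : (L.sum Lext).Structure U), IsStandard T U → ∀ v : α → U, φ.Realize v)
    (v : α → M) : φ.Realize v := by
  have key : M ⊨ ((φ.relabel Sum.inr : (L.sum Lext).Formula (Empty ⊕ α)).iAlls α) := by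
    refine realize_of_standard T fun U _ hU => ?_
    rw [Sentence.Realize, Formula.realize_iAlls]
    intro w
    rw [Formula.realize_relabel]
    exact h U _ hU _
  rw [Sentence.Realize, Formula.realize_iAlls] at key
  have := key v
  rwa [Formula.realize_relabel, Sum.elim_comp_inr] at this

theorem isConditionTree_of_standardTheory (T : L.Theory) [M ⊨ standardTheory T] :
    IsConditionTree (M := M) (extRel L ExtRel.lt) (extRel L ExtRel.pre)
      (extRel L ExtRel.con) where
  irrefl := by
    have := realize_of_standard (M := M) T (σ := ∀' ∼(bdRel L .lt 0 0)) (by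
      intro U _ hU
      simpa [Sentence.Realize, Formula.Realize, Fin.snoc] using hU.tree.irrefl)
    simpa [Sentence.Realize, Formula.Realize, Fin.snoc] using this
  exists_max := by
    have := realize_of_standard (M := M) T (σ := ∀' ∀' ∀' (bdRel L .pre 2 0 ⟹
      (∃' (bdRel L .con 2 3 ⊓ bdRel L .con 1 3)) ⟹
      ∃' (bdRel L .pre 3 0 ⊓ (∃' (bdRel L .con 3 4 ⊓ bdRel L .con 1 4)) ⊓
        ∀' (bdRel L .pre 4 0 ⟹ (∃' (bdRel L .con 4 5 ⊓ bdRel L .con 1 5)) ⟹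
          bdRel L .pre 4 3)))) (by
      intro U _ hU
      simpa [Sentence.Realize, Formula.Realize, Fin.snoc, and_assoc] using hU.tree.exists_max)
    simpa [Sentence.Realize, Formula.Realize, Fin.snoc, and_assoc] using this
  trans := by
    have := realize_of_standard (M := M) T
      (σ := ∀' ∀' ∀' (bdRel L .lt 0 1 ⟹ bdRel L .lt 1 2 ⟹ bdRel L .lt 0 2)) (by
      intro U _ hU
      simpa [Sentence.Realize, Formula.Realize, Fin.snoc] using hU.tree.trans)
    simpa [Sentence.Realize, Formula.Realize, Fin.snoc] using this
  pre_self := by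
    have := realize_of_standard (M := M) T (σ := ∀' ∀' (bdRel L .pre 0 1 ⟹ bdRel L .pre 0 0)) (by
      intro U _ hU
      simpa [Sentence.Realize, Formula.Realize, Fin.snoc] using hU.tree.pre_self)
    simpa [Sentence.Realize, Formula.Realize, Fin.snoc] using this
  pre_trans := by
    have := realize_of_standard (M := M) T
      (σ := ∀' ∀' ∀' (bdRel L .pre 0 1 ⟹ bdRel L .pre 1 2 ⟹ bdRel L .pre 0 2)) (by
      intro U _ hU
      simpa [Sentence.Realize, Formula.Realize, Fin.snoc] using hU.tree.pre_trans)
    simpa [Sentence.Realize, Formula.Realize, Fin.snoc] using this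
  pre_antisymm := by
    have := realize_of_standard (M := M) T
      (σ := ∀' ∀' (bdRel L .pre 0 1 ⟹ bdRel L .pre 1 0 ⟹ (&0 =' &1))) (by
      intro U _ hU
      simpa [Sentence.Realize, Formula.Realize, Fin.snoc] using hU.tree.pre_antisymm)
    simpa [Sentence.Realize, Formula.Realize, Fin.snoc] using this
  pre_total := by
    have := realize_of_standard (M := M) T (σ := ∀' ∀' ∀' (bdRel L .pre 0 2 ⟹ bdRel L .pre 1 2 ⟹
      (bdRel L .pre 0 1 ⊔ bdRel L .pre 1 0))) (by
      intro U _ hU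
      simpa [Sentence.Realize, Formula.Realize, Fin.snoc] using hU.tree.pre_total)
    simpa [Sentence.Realize, Formula.Realize, Fin.snoc] using this
  pre_convex := by
    have := realize_of_standard (M := M) T (σ := ∀' ∀' ∀' ∀' (bdRel L .pre 0 1 ⟹ bdRel L .pre 0 2 ⟹
      bdRel L .lt 1 3 ⟹ bdRel L .lt 3 2 ⟹ bdRel L .pre 0 3)) (by
      intro U _ hU
      simpa [Sentence.Realize, Formula.Realize, Fin.snoc] using hU.tree.pre_convex)
    simpa [Sentence.Realize, Formula.Realize, Fin.snoc] using this
  lt_of_pre := by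
    have := realize_of_standard (M := M) T (σ := ∀' ∀' ∀' (bdRel L .pre 0 1 ⟹ ∼(&0 =' &1) ⟹
      bdRel L .pre 1 2 ⟹ bdRel L .lt 0 2)) (by
      intro U _ hU
      simpa [Sentence.Realize, Formula.Realize, Fin.snoc] using hU.tree.lt_of_pre)
    simpa [Sentence.Realize, Formula.Realize, Fin.snoc] using this
  exists_upper := by
    have := realize_of_standard (M := M) T (σ := ∀' ∀' (bdRel L .pre 0 1 ⟹ ∼(&0 =' &1) ⟹
      ∃' (bdRel L .pre 0 2 ⊓ ∀' (bdRel L .pre 1 3 ⟹ bdRel L .lt 3 2)))) (by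
      intro U _ hU
      simpa [Sentence.Realize, Formula.Realize, Fin.snoc] using hU.tree.exists_upper)
    simpa [Sentence.Realize, Formula.Realize, Fin.snoc] using this
  con_anti := by
    have := realize_of_standard (M := M) T
      (σ := ∀' ∀' ∀' (bdRel L .pre 0 1 ⟹ bdRel L .con 1 2 ⟹ bdRel L .con 0 2)) (by
      intro U _ hU
      simpa [Sentence.Realize, Formula.Realize, Fin.snoc] using hU.tree.con_anti)
    simpa [Sentence.Realize, Formula.Realize, Fin.snoc] using this
  exists_append := by
    have := realize_of_standard (M := M) T
      (σ := ∀' ∀' (bdRel L .pre 0 0 ⟹ ∃' (bdRel L .pre 0 2 ⊓ bdRel L .pre 2 2 ⊓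
      ∀' (bdRel L .con 2 3 ⇔ (bdRel L .con 0 3 ⊓ bdRel L .con 1 3))))) (by
      intro U _ hU
      simpa [Sentence.Realize, Formula.Realize, Fin.snoc, and_assoc] using hU.tree.exists_append)
    simpa [Sentence.Realize, Formula.Realize, Fin.snoc, and_assoc] using this
  exists_root := by
    have := realize_of_standard (M := M) T (σ := ∃' (bdRel L .pre 0 0 ⊓ ∀' bdRel L .con 0 1)) (by
      intro U _ hU
      simpa [Sentence.Realize, Formula.Realize, Fin.snoc] using hU.tree.exists_root)
    simpa [Sentence.Realize, Formula.Realize, Fin.snoc] using this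
  exists_meet := by
    have := realize_of_standard (M := M) T (σ := ∀' ∀' ∃' (bdRel L .pre 2 0 ⊓ bdRel L .pre 2 1 ⊓
      ∀' (bdRel L .pre 3 0 ⟹ bdRel L .pre 3 1 ⟹ bdRel L .pre 3 2))) (by
      intro U _ hU
      simpa [Sentence.Realize, Formula.Realize, Fin.snoc, and_assoc] using hU.tree.exists_meet)
    simpa [Sentence.Realize, Formula.Realize, Fin.snoc, and_assoc] using this

end Models

section Quotient

variable {T : L.Theory} {M : Type} [(L.sum Lext).Structure M]

theorem equivalence_of_standardTheory (T : L.Theory) [M ⊨ standardTheory T] :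
    Equivalence (fun x y : M => extRel L ExtRel.eqv x y) where
  refl := by
    have := realize_of_standard (M := M) T (σ := ∀' bdRel L .eqv 0 0) (by
      intro U _ hU
      obtain ⟨A, g, hg, -⟩ := hU.model
      simp [Sentence.Realize, Formula.Realize, Fin.snoc, hg.eqv_iff])
    simpa [Sentence.Realize, Formula.Realize, Fin.snoc] using this
  symm {x y} := by
    have := realize_of_standard (M := M) T
      (σ := ∀' ∀' (bdRel L .eqv 0 1 ⟹ bdRel L .eqv 1 0)) (by
      intro U _ hU
      obtain ⟨A, g, hg, -⟩ := hU.model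
      simp +contextual [Sentence.Realize, Formula.Realize, Fin.snoc, hg.eqv_iff])
    simp only [Sentence.Realize, Formula.Realize, Fin.snoc, BoundedFormula.realize_all,
      BoundedFormula.realize_imp, realize_bdRel] at this
    exact this x y
  trans {x y z} := by
    have := realize_of_standard (M := M) T
      (σ := ∀' ∀' ∀' (bdRel L .eqv 0 1 ⟹ bdRel L .eqv 1 2 ⟹ bdRel L .eqv 0 2)) (by
      intro U _ hU
      obtain ⟨A, g, hg, -⟩ := hU.model
      simp +contextual [Sentence.Realize, Formula.Realize, Fin.snoc, hg.eqv_iff])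
    simp only [Sentence.Realize, Formula.Realize, Fin.snoc, BoundedFormula.realize_all,
      BoundedFormula.realize_imp, realize_bdRel] at this
    exact this x y z

/-- The formula saying that two tuples are equivalent. -/
noncomputable def tupleEqv (L : FirstOrder.Language.{0, 0}) (n : ℕ) :
    (L.sum Lext).Formula (Fin n ⊕ Fin n) :=
  Formula.iInf fun i : Fin n =>
    freeRel L ExtRel.eqv (Term.var (Sum.inl i)) (Term.var (Sum.inr i))

@[simp]
theorem realize_tupleEqv {n : ℕ} (v : Fin n ⊕ Fin n → M) :
    (tupleEqv L n).Realize v ↔ ∀ i, extRel L ExtRel.eqv (v (Sum.inl i)) (v (Sum.inr i)) := by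
  simp [tupleEqv]

theorem eqv_funMap (T : L.Theory) [M ⊨ standardTheory T] {n : ℕ} (F : L.Functions n)
    (x y : Fin n → M) (h : ∀ i, extRel L ExtRel.eqv (x i) (y i)) :
    extRel L ExtRel.eqv (Structure.funMap ((LHom.sumInl (L' := Lext)).onFunction F) x)
      (Structure.funMap ((LHom.sumInl (L' := Lext)).onFunction F) y) := by
  have := realize_formula_of_standard (M := M) T (φ := (tupleEqv L n).imp
    (freeRel L ExtRel.eqv
      (Term.func ((LHom.sumInl (L' := Lext)).onFunction F) fun i => Term.var (Sum.inl i))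
      (Term.func ((LHom.sumInl (L' := Lext)).onFunction F) fun i => Term.var (Sum.inr i)))) (by
    intro U _ hU v
    obtain ⟨A, g, hg, -⟩ := hU.model
    rw [Formula.realize_imp, realize_tupleEqv, realize_freeRel]
    intro hv
    simp only [hg.eqv_iff] at hv ⊢
    refine (hg.map_fun n F _).trans (Eq.trans ?_ (hg.map_fun n F _).symm)
    congr 1
    funext i
    exact hv i) (Sum.elim x y)
  rw [Formula.realize_imp, realize_tupleEqv, realize_freeRel] at this
  exact this h

theorem eqv_relMap (T : L.Theory) [M ⊨ standardTheory T] {n : ℕ} (R : L.Relations n)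
    (x y : Fin n → M) (h : ∀ i, extRel L ExtRel.eqv (x i) (y i)) :
    Structure.RelMap ((LHom.sumInl (L' := Lext)).onRelation R) x ↔
      Structure.RelMap ((LHom.sumInl (L' := Lext)).onRelation R) y := by
  have := realize_formula_of_standard (M := M) T (φ := (tupleEqv L n).imp
    (Formula.iff
      (Relations.formula ((LHom.sumInl (L' := Lext)).onRelation R)
        fun i => Term.var (Sum.inl i))
      (Relations.formula ((LHom.sumInl (L' := Lext)).onRelation R)
        fun i => Term.var (Sum.inr i)))) (by
    intro U _ hU v
    obtain ⟨A, g, hg, -⟩ := hU.model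
    rw [Formula.realize_imp, realize_tupleEqv, Formula.realize_iff, Formula.realize_rel,
      Formula.realize_rel]
    intro hv
    simp only [hg.eqv_iff] at hv
    refine (hg.map_rel n R _).trans (Iff.trans ?_ (hg.map_rel n R _).symm)
    refine iff_of_eq (congrArg _ ?_)
    funext i
    exact hv i) (Sum.elim x y)
  rw [Formula.realize_imp, realize_tupleEqv, Formula.realize_iff, Formula.realize_rel,
    Formula.realize_rel] at this
  exact this h

theorem exists_isProjection (T : L.Theory) [Nonempty M] [M ⊨ standardTheory T] :
    ∃ (N : Theory.ModelType.{0, 0, 0} T) (g : M → N), IsProjection L g := by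
  let s : Setoid M := ⟨fun x y => extRel L ExtRel.eqv x y, equivalence_of_standardTheory T⟩
  let P : L.Prestructure s :=
    { toStructure := (LHom.sumInl (L' := Lext)).reduct M
      fun_equiv := fun {n F} x y h => eqv_funMap T F x y h
      rel_equiv := fun {n R} x y h => propext (eqv_relMap T R x y h) }
  let S : L.Structure (Quotient s) := quotientStructure
  have hg : IsProjection L (fun x : M => (⟦x⟧ : Quotient s)) :=
    { surjective := Quotient.mk_surjective
      eqv_iff := fun x y => (Quotient.eq (r := s)).symm
      map_rel := fun n R x => (relMap_quotient_mk' s R x).symm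
      map_fun := fun n F x => (funMap_quotient_mk' s F x).symm }
  have hT : Quotient s ⊨ T := by
    refine ⟨fun σ hσ => ?_⟩
    have : Formula.Realize (translate σ : (L.sum Lext).Sentence) (default : Empty → M) :=
      realize_formula_of_standard T (fun U _ hU v => by
        obtain ⟨A, g, hg, -⟩ := hU.model
        rw [hg.realize_translate_formula, Subsingleton.elim (g ∘ v) default]
        exact T.realize_sentence_of_mem hσ) _
    rw [hg.realize_translate_formula] at this
    rw [Sentence.Realize]
    convert this
  have hne : Nonempty (Quotient s) := ‹Nonempty M›.map (⟦·⟧)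
  exact ⟨Theory.ModelType.of T (Quotient s), _, hg⟩

theorem exists_code (T : L.Theory) [M ⊨ standardTheory T] {N : Type} [L.Structure N] {g : M → N}
    (hg : IsProjection L g) {k : ℕ} (φ : L.Formula (Fin 1 ⊕ Fin k)) (a : Fin k → N) :
    ∃ c : M, ∀ y, extRel L ExtRel.con c y ↔ φ.Realize (Sum.elim (fun _ => g y) a) := by
  obtain ⟨b, rfl⟩ : ∃ b : Fin k → M, g ∘ b = a := hg.surjective.comp_left a
  have key : ∀ {U B : Type} [(L.sum Lext).Structure U] [L.Structure B] {f : U → B},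
      IsProjection L f → ∀ v : Fin k → U,
      (Formula.Realize (∃' ∀' ((bdRel L .con 0 1) ⇔
        (BoundedFormula.relabel (k := 0) (n := 2)
          (Sum.elim (fun _ => Sum.inr 1) Sum.inl : Fin 1 ⊕ Fin k → Fin k ⊕ Fin 2)
          (translate φ)))) v ↔
        ∃ c, ∀ y, extRel L ExtRel.con c y ↔ φ.Realize (Sum.elim (fun _ => f y) (f ∘ v))) := by
    intro U B _ _ f hf v
    rw [Formula.Realize, BoundedFormula.realize_ex]
    refine exists_congr fun c => ?_
    rw [BoundedFormula.realize_all]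
    refine forall_congr' fun y => ?_
    rw [BoundedFormula.realize_iff, BoundedFormula.realize_relabel, realize_bdRel]
    refine iff_congr Iff.rfl ?_
    rw [hf.realize_translate, Formula.Realize]
    refine iff_of_eq ?_
    congr 1
    · funext i
      rcases i with i | i <;> rfl
    · exact Subsingleton.elim _ _
  refine (key hg b).1 (realize_formula_of_standard T (fun U _ hU v => ?_) b)
  obtain ⟨A, f, hf, hX⟩ := hU.model
  rw [key hf]
  exact hX {z | φ.Realize (Sum.elim (fun _ => z) (f ∘ v))}

end Quotient

section Orders

/-- The symbol of the language of orders. -/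
def ordSym : Lord.Relations 2 := OrdRel.lt

/-- The atomic formula `xᵢ < xⱼ` in bound variables. -/
def bdLt {α : Type} {n : ℕ} (i j : Fin n) : Lord.BoundedFormula α n :=
  Relations.boundedFormula₂ ordSym
    (Term.var (Sum.inr i)) (Term.var (Sum.inr j))

@[simp]
theorem realize_bdLt {α : Type} {n : ℕ} (i j : Fin n) {M : Type} [Lord.Structure M]
    (v : α → M) (xs : Fin n → M) : (bdLt i j).Realize v xs ↔ ordLt (xs i) (xs j) := by
  rw [bdLt, BoundedFormula.realize_rel₂]
  rfl

theorem isDLOStructure_of_model (N : Type) [Lord.Structure N] [N ⊨ Tdlo] : IsDLOStructure N := by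
  have key : ∀ σ : Lord.Sentence, (∀ (M : Type) (_ : Lord.Structure M), IsDLOStructure M → M ⊨ σ) →
      N ⊨ σ := fun σ h =>
    Tdlo.realize_sentence_of_mem (fun M S _ hM => h M S hM)
  refine ⟨?_, ?_, ?_, ?_, ?_, ?_⟩
  · have := key (∀' ∼(bdLt 0 0)) (fun U _ hU => by
      simpa [Sentence.Realize, Formula.Realize, Fin.snoc] using hU.1)
    simpa [Sentence.Realize, Formula.Realize, Fin.snoc] using this
  · have := key (∀' ∀' ∀' (bdLt 0 1 ⟹ bdLt 1 2 ⟹ bdLt 0 2)) (fun U _ hU => by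
      simpa [Sentence.Realize, Formula.Realize, Fin.snoc] using hU.2.1)
    simpa [Sentence.Realize, Formula.Realize, Fin.snoc] using this
  · have := key (∀' ∀' (bdLt 0 1 ⊔ (bdLt 1 0 ⊔ &0 =' &1))) (fun U _ hU => by
      simpa [Sentence.Realize, Formula.Realize, Fin.snoc] using hU.2.2.1)
    simpa [Sentence.Realize, Formula.Realize, Fin.snoc] using this
  · have := key (∀' ∀' (bdLt 0 1 ⟹ ∃' (bdLt 0 2 ⊓ bdLt 2 1))) (fun U _ hU => by
      simpa [Sentence.Realize, Formula.Realize, Fin.snoc] using hU.2.2.2.1)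
    simpa [Sentence.Realize, Formula.Realize, Fin.snoc] using this
  · have := key (∀' ∃' bdLt 0 1) (fun U _ hU => by
      simpa [Sentence.Realize, Formula.Realize, Fin.snoc] using hU.2.2.2.2.1)
    simpa [Sentence.Realize, Formula.Realize, Fin.snoc] using this
  · have := key (∀' ∃' bdLt 1 0) (fun U _ hU => by
      simpa [Sentence.Realize, Formula.Realize, Fin.snoc] using hU.2.2.2.2.2)
    simpa [Sentence.Realize, Formula.Realize, Fin.snoc] using this

/-- The linear order of a dense linear order structure. -/
noncomputable abbrev IsDLOStructure.linearOrder {N : Type} [Lord.Structure N]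
    (h : IsDLOStructure N) :
    LinearOrder N :=
  letI : IsStrictOrder N ordLt := { irrefl := h.1, trans := h.2.1 }
  letI : Std.Trichotomous (α := N) ordLt := ⟨fun x y hxy hyx => by
    rcases h.2.2.1 x y with h | h | h
    exacts [absurd h hxy, absurd h hyx, h]⟩
  letI : IsStrictTotalOrder N ordLt := {}
  letI := Classical.decRel (ordLt (M := N))
  linearOrderOfSTO ordLt

theorem model_Tdlo_of_standardTheory {L : FirstOrder.Language.{0, 0}} (T : L.Theory) {M : Type}
    [(L.sum Lext).Structure M] [M ⊨ standardTheory T] :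
    @Theory.Model Lord M (ordStructure L M) Tdlo := by
  let _ := ordStructure L M
  refine ⟨fun σ hσ => ?_⟩
  rw [← (ordHom L).realize_onSentence M σ]
  refine realize_of_standard T fun U _ hU => ?_
  let _ := ordStructure L U
  rw [(ordHom L).realize_onSentence U σ]
  exact hσ U _ (hU.tree.exists_root.nonempty) hU.dlo

end Orders

section Interpretations

/-- The identity interpretation of an order in the expanded language. -/
abbrev ordInterpretation (L : FirstOrder.Language.{0, 0}) : Interpretation (L.sum Lext) Lord where
  d := 1
  dom := ⊤
  eqf := Term.equal (Term.var (Sum.inl 0)) (Term.var (Sum.inr 0))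
  rel := fun _ R => Relations.formula ((ordHom L).onRelation R) fun i => Term.var (i, 0)
  func := fun _ F => Empty.elim F

/-- The interpretation of `L` in the expanded language by the quotient. -/
abbrev quotientInterpretation (L : FirstOrder.Language.{0, 0}) : Interpretation (L.sum Lext) L where
  d := 1
  dom := ⊤
  eqf := freeRel L ExtRel.eqv (Term.var (Sum.inl 0)) (Term.var (Sum.inr 0))
  rel := fun _ R => Relations.formula ((LHom.sumInl (L' := Lext)).onRelation R)
    fun i => Term.var (i, 0)
  func := fun _ F => freeRel L ExtRel.eqv
    (Term.func ((LHom.sumInl (L' := Lext)).onFunction F) fun i => Term.var (Sum.inl (i, 0)))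
    (Term.var (Sum.inr 0))

variable {M N : Type} [(L.sum Lext).Structure M]

/-- The element of the domain of the quotient interpretation given by an element. -/
def toQuotientDom (x : M) : (quotientInterpretation L).Dom M := ⟨fun _ => x, id⟩

theorem toQuotientDom_apply (a : (quotientInterpretation L).Dom M) :
    toQuotientDom (a.1 0) = a :=
  Subtype.ext (funext fun _ => congrArg a.1 (Subsingleton.elim (α := Fin 1) _ _))

/-- The element of the domain of the order interpretation given by an element. -/
def toOrdDom (x : M) : (ordInterpretation L).Dom M := ⟨fun _ => x, id⟩

theorem toOrdDom_apply (a : (ordInterpretation L).Dom M) : toOrdDom (a.1 0) = a :=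
  Subtype.ext (funext fun _ => congrArg a.1 (Subsingleton.elim (α := Fin 1) _ _))

theorem realize_quotient_eqf (a b : (quotientInterpretation L).Dom M) :
    (quotientInterpretation L).eqf.Realize (Sum.elim a.1 b.1) ↔
      extRel L ExtRel.eqv (a.1 0) (b.1 0) := by
  change (freeRel L _ _ _).Realize (Sum.elim a.1 b.1) ↔ _
  rw [realize_freeRel]
  rfl

theorem realize_quotient_rel {n : ℕ} (R : L.Relations n)
    (f : Fin n → (quotientInterpretation L).Dom M) :
    ((quotientInterpretation L).rel n R).Realize (fun p => (f p.1).1 p.2) ↔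
      Structure.RelMap ((LHom.sumInl (L' := Lext)).onRelation R) fun i => (f i).1 0 := by
  change (Relations.formula _ _).Realize _ ↔ _
  rw [Formula.realize_rel]
  rfl

theorem realize_quotient_func {n : ℕ} (F : L.Functions n)
    (f : Fin n → (quotientInterpretation L).Dom M) (b : (quotientInterpretation L).Dom M) :
    ((quotientInterpretation L).func n F).Realize (Sum.elim (fun p => (f p.1).1 p.2) b.1) ↔
      extRel L ExtRel.eqv
        (Structure.funMap ((LHom.sumInl (L' := Lext)).onFunction F) fun i => (f i).1 0)
        (b.1 0) := by
  change (freeRel L _ _ _).Realize _ ↔ _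
  rw [realize_freeRel]
  rfl

theorem realize_ord_eqf (a b : (ordInterpretation L).Dom M) :
    (ordInterpretation L).eqf.Realize (Sum.elim a.1 b.1) ↔ a.1 0 = b.1 0 := by
  change (Term.equal _ _).Realize _ ↔ _
  rw [Formula.realize_equal]
  rfl

theorem realize_ord_rel {n : ℕ} (R : Lord.Relations n)
    (f : Fin n → (ordInterpretation L).Dom M) :
    ((ordInterpretation L).rel n R).Realize (fun p => (f p.1).1 p.2) ↔
      Structure.RelMap ((ordHom L).onRelation R) fun i => (f i).1 0 := by
  change (Relations.formula _ _).Realize _ ↔ _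
  rw [Formula.realize_rel]
  rfl

theorem IsProjection.represents [S : L.Structure N] {g : M → N} (hg : IsProjection L g) :
    (quotientInterpretation L).Represents M N S (fun a => g (a.1 0)) := by
  refine ⟨fun y => ?_, fun a b => ?_, fun n R f => ?_, fun n F f b => ?_⟩
  · obtain ⟨x, rfl⟩ := hg.surjective y
    exact ⟨toQuotientDom x, rfl⟩
  · exact (hg.eqv_iff _ _).symm.trans (realize_quotient_eqf a b).symm
  · exact (hg.map_rel n R _).symm.trans (realize_quotient_rel R f).symm
  · refine Iff.trans ?_ (realize_quotient_func F f b).symm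
    refine Iff.trans ?_ (hg.eqv_iff _ _).symm
    exact iff_of_eq (congrArg (· = _) (hg.map_fun n F fun i => (f i).1 0).symm)

theorem isProjection_of_represents {S : L.Structure N}
    {g : (quotientInterpretation L).Dom M → N}
    (hg : (quotientInterpretation L).Represents M N S g) :
    IsProjection L (fun x : M => g (toQuotientDom x)) := by
  obtain ⟨h₁, h₂, h₃, h₄⟩ := hg
  have h₂' : ∀ x y : M, extRel L ExtRel.eqv x y ↔ g (toQuotientDom x) = g (toQuotientDom y) :=
    fun x y => ((h₂ _ _).trans (realize_quotient_eqf (toQuotientDom x) (toQuotientDom y))).symm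
  refine ⟨fun y => ?_, h₂', fun n R x => ?_, fun n F x => ?_⟩
  · obtain ⟨a, rfl⟩ := h₁ y
    exact ⟨a.1 0, congrArg g (toQuotientDom_apply a)⟩
  · exact ((h₃ n R fun i => toQuotientDom (x i)).trans
      (realize_quotient_rel R fun i => toQuotientDom (x i))).symm
  · refine ((h₄ n F (fun i => toQuotientDom (x i)) _).2
      ((realize_quotient_func F (fun i => toQuotientDom (x i)) (toQuotientDom _)).2 ?_)).symm
    exact (h₂' _ _).2 rfl

theorem ordInterpretation_represents (L : FirstOrder.Language.{0, 0}) (M : Type)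
    [(L.sum Lext).Structure M] :
    (ordInterpretation L).Represents M M (ordStructure L M) (fun a => a.1 0) := by
  refine ⟨fun y => ⟨toOrdDom y, rfl⟩, fun a b => ?_, fun n R f => ?_,
    fun n F => Empty.elim F⟩
  · exact (realize_ord_eqf a b).symm
  · exact (realize_ord_rel R f).symm

theorem ordLt_of_represents {S : Lord.Structure N} {g : (ordInterpretation L).Dom M → N}
    (hg : (ordInterpretation L).Represents M N S g) :
    Function.Bijective (fun x : M => g (toOrdDom x)) ∧
      ∀ x y : M, ordLt (g (toOrdDom x)) (g (toOrdDom y)) ↔ extRel L ExtRel.lt x y := by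
  obtain ⟨h₁, h₂, h₃, -⟩ := hg
  refine ⟨⟨fun x y h => ?_, fun y => ?_⟩, fun x y => ?_⟩
  · exact (realize_ord_eqf (toOrdDom x) (toOrdDom y)).1 ((h₂ _ _).1 h)
  · obtain ⟨a, rfl⟩ := h₁ y
    exact ⟨a.1 0, congrArg g (toOrdDom_apply a)⟩
  · have := (h₃ 2 ordSym ![toOrdDom x, toOrdDom y]).trans (realize_ord_rel _ _)
    rw [ordLt, extRel]
    refine (iff_of_eq (congrArg _ (funext fun i => ?_))).trans
      (this.trans (iff_of_eq (congrArg _ (funext fun i => ?_))))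
    · fin_cases i <;> rfl
    · fin_cases i <;> rfl

theorem quotientInterpretation_interpretsIn (T : L.Theory) :
    (quotientInterpretation L).InterpretsIn (standardTheory T) T := fun M => by
  obtain ⟨N, g, hg⟩ := exists_isProjection (M := M) T
  exact ⟨N, _, hg.represents⟩

theorem ordInterpretation_interpretsIn (T : L.Theory) :
    (ordInterpretation L).InterpretsIn (standardTheory T) Tdlo := fun M => by
  let _ := ordStructure L M
  have := model_Tdlo_of_standardTheory T (M := M)
  exact ⟨Theory.ModelType.of Tdlo M, _, ordInterpretation_represents L M⟩

end Interpretations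

section Completeness

theorem IsDLOStructure.exists_between_finsets {N : Type} [Lord.Structure N] [Nonempty N]
    (h : IsDLOStructure N) (lo hi : Finset N) (hlt : ∀ x ∈ lo, ∀ y ∈ hi, ordLt x y) :
    ∃ m : N, (∀ x ∈ lo, ordLt x m) ∧ ∀ y ∈ hi, ordLt m y := by
  let _ := h.linearOrder
  have : DenselyOrdered N := ⟨h.2.2.2.1⟩
  have : NoMaxOrder N := ⟨h.2.2.2.2.1⟩
  have : NoMinOrder N := ⟨h.2.2.2.2.2⟩
  exact Order.exists_between_finsets lo hi hlt

theorem IsDLOStructure.infinite {N : Type} [Lord.Structure N] [Nonempty N]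
    (h : IsDLOStructure N) : Infinite N := by
  let _ := h.linearOrder
  have : NoMaxOrder N := ⟨h.2.2.2.2.1⟩
  exact NoMaxOrder.infinite

theorem IsDLOStructure.elementarilyEquivalent_of_countable {M N : Type} [Lord.Structure M]
    [Lord.Structure N] [Nonempty M] [Nonempty N] [Countable M] [Countable N]
    (hM : IsDLOStructure M) (hN : IsDLOStructure N) : M ≅[Lord] N := by
  let _ := hM.linearOrder
  let _ := hN.linearOrder
  have : DenselyOrdered M := ⟨hM.2.2.2.1⟩
  have : NoMaxOrder M := ⟨hM.2.2.2.2.1⟩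
  have : NoMinOrder M := ⟨hM.2.2.2.2.2⟩
  have : DenselyOrdered N := ⟨hN.2.2.2.1⟩
  have : NoMaxOrder N := ⟨hN.2.2.2.2.1⟩
  have : NoMinOrder N := ⟨hN.2.2.2.2.2⟩
  obtain ⟨f⟩ := Order.iso_of_countable_dense M N
  let e : M ≃[Lord] N :=
    { f.toEquiv with
      map_fun' := fun F => Empty.elim F
      map_rel' := fun {n} R x => by
        cases R
        have hx : x = ![x 0, x 1] := by
          funext i
          fin_cases i <;> rfl
        have hfx : f ∘ x = ![f (x 0), f (x 1)] := by
          funext i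
          fin_cases i <;> rfl
        have := f.lt_iff_lt (x := x 0) (y := x 1)
        change Structure.RelMap ordSym (f ∘ x) ↔ Structure.RelMap ordSym x
        rw [hfx, hx]
        exact this }
  exact e.toElementaryEmbedding.elementarilyEquivalent

theorem card_Lord_le : Lord.card ≤ ℵ₀ := by
  have h₁ : IsEmpty (Σ n, Lord.Functions n) := ⟨fun F => Empty.elim F.2⟩
  have h₂ : Subsingleton (Σ n, Lord.Relations n) := ⟨by
    rintro ⟨_, ⟨⟩⟩ ⟨_, ⟨⟩⟩
    rfl⟩
  exact Cardinal.mk_le_aleph0_iff.2 (inferInstanceAs (Countable (_ ⊕ _)))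

theorem IsDLOStructure.elementarilyEquivalent {M N : Type} [Lord.Structure M]
    [Lord.Structure N] [Nonempty M] [Nonempty N]
    (hM : IsDLOStructure M) (hN : IsDLOStructure N) : M ≅[Lord] N := by
  have key : ∀ (K : Type) [Lord.Structure K] [Nonempty K], IsDLOStructure K →
      ∃ (K' : Type) (_ : Lord.Structure K'), (K ≅[Lord] K') ∧ Nonempty K' ∧ Countable K' ∧
        IsDLOStructure K' := fun K _ _ hK => by
    have := hK.infinite
    obtain ⟨K', h, hK'⟩ := exists_elementarilyEquivalent_card_eq Lord K (ℵ₀ : Cardinal.{0}) le_rfl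
      (by simpa using card_Lord_le)
    have hmod : K ⊨ Tdlo := ⟨fun σ hσ => hσ K _ ‹_› hK⟩
    have := h.theory_model (T := Tdlo)
    exact ⟨K', K'.str, h, h.nonempty, Cardinal.mk_le_aleph0_iff.1 hK'.le,
      isDLOStructure_of_model K'⟩
  obtain ⟨M', _, hMM', _, _, hM'⟩ := key M hM
  obtain ⟨N', _, hNN', _, _, hN'⟩ := key N hN
  exact hMM'.trans ((hM'.elementarilyEquivalent_of_countable hN').trans hNN'.symm)

end Completeness

section JointModels

/-- The structure for the additional symbols given by three relations and a projection. -/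
abbrev extStructure {U A : Type} (lt pre con : U → U → Prop) (π : U → A) :
    Lext.Structure U where
  funMap := fun F => Empty.elim F
  RelMap := fun R => match R with
    | ExtRel.eqv => fun x => π (x 0) = π (x 1)
    | ExtRel.lt => fun x => lt (x 0) (x 1)
    | ExtRel.pre => fun x => pre (x 0) (x 1)
    | ExtRel.con => fun x => con (x 0) (x 1)

theorem exists_isStandard (T : L.Theory) (A : Theory.ModelType.{0, 0, 0} T) :
    ∃ (U : Type) (_ : (L.sum Lext).Structure U) (g : U → A), Nonempty U ∧ IsStandard T U ∧
      IsProjection L g := by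
  obtain ⟨U, lt, pre, con, π, hU, hπ, htree, htotal, hdense, hmax, hmin, hcode⟩ :=
    exists_conditionTree A
  let _ : L.Structure U :=
    { funMap := fun F x => Function.surjInv hπ (Structure.funMap F (π ∘ x))
      RelMap := fun R x => Structure.RelMap R (π ∘ x) }
  let _ : Lext.Structure U := extStructure lt pre con π
  have hg : IsProjection L π :=
    { surjective := hπ
      eqv_iff := fun _ _ => Iff.rfl
      map_rel := fun _ _ _ => Iff.rfl
      map_fun := fun _ _ _ => Function.surjInv_eq hπ _ }
  exact ⟨U, inferInstance, π, hU,
    { tree := htree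
      dlo := ⟨htree.irrefl, htree.trans, htotal, hdense, hmax, hmin⟩
      model := ⟨A, π, hg, hcode⟩ }, hg⟩

theorem jointModels_standardTheory (T : L.Theory) :
    JointModels (standardTheory T) T Tdlo (quotientInterpretation L) (ordInterpretation L) := by
  intro A₁ A₂
  obtain ⟨U, _, g, _, hU, hg⟩ := exists_isStandard T A₁
  have hmod : U ⊨ standardTheory T := ⟨fun σ hσ => hσ U _ ‹_› hU⟩
  have hord := model_Tdlo_of_standardTheory T (M := U)
  let _ := ordStructure L U
  refine ⟨Theory.ModelType.of (standardTheory T) U, A₁, _, Theory.ModelType.of Tdlo U, _,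
    hg.represents, ordInterpretation_represents L U, rfl, ?_⟩
  exact (isDLOStructure_of_model U).elementarilyEquivalent (isDLOStructure_of_model A₂)

end JointModels

section Transfer

/-- The formula `par < x` with a parameter. -/
def lowerBoundFormula {N : Type} [Lord.Structure N] (a : N) : ParamFormula Lord N 1 :=
  ⟨1, Relations.formula₂ ordSym (Term.var (Sum.inr 0)) (Term.var (Sum.inl 0)), fun _ => a⟩

/-- The formula `x < par` with a parameter. -/
def upperBoundFormula {N : Type} [Lord.Structure N] (a : N) : ParamFormula Lord N 1 :=
  ⟨1, Relations.formula₂ ordSym (Term.var (Sum.inl 0)) (Term.var (Sum.inr 0)), fun _ => a⟩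

theorem lowerBoundFormula_realize {N : Type} [Lord.Structure N] (a : N) (e : Fin 1 → N) :
    (lowerBoundFormula a).Realize e ↔ ordLt a (e 0) :=
  Formula.realize_rel₂

theorem upperBoundFormula_realize {N : Type} [Lord.Structure N] (a : N) (e : Fin 1 → N) :
    (upperBoundFormula a).Realize e ↔ ordLt (e 0) a :=
  Formula.realize_rel₂

theorem lowerBoundFormula_injective {N : Type} [Lord.Structure N] :
    Function.Injective (lowerBoundFormula (N := N)) := fun a b h => by
  simp only [lowerBoundFormula, ParamFormula.mk.injEq, heq_eq_eq, true_and] at h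
  exact congrFun h 0

theorem upperBoundFormula_injective {N : Type} [Lord.Structure N] :
    Function.Injective (upperBoundFormula (N := N)) := fun a b h => by
  simp only [upperBoundFormula, ParamFormula.mk.injEq, heq_eq_eq, true_and] at h
  exact congrFun h 0

theorem fillsCuts_of_saturated {M N : Type} [Nonempty M] [Lord.Structure M]
    (hM : IsDLOStructure M) [S : Lord.Structure N] {f : M → N} (hf : Function.Bijective f)
    (hlt : ∀ x y, ordLt (f x) (f y) ↔ ordLt x y) {lam : Cardinal.{0}} (hlam : ℵ₀ < lam)
    (hN : IsSaturatedAt Lord N S lam) : FillsCuts (ordLt (M := M)) lam := by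
  intro ι κ a b hι hκ hab
  obtain ⟨e, he⟩ := hN (Set.range (f ∘ a) ∪ Set.range (f ∘ b))
    ((mk_union_le _ _).trans_lt
      (add_lt_of_lt hlam.le (mk_range_le.trans_lt hι) (mk_range_le.trans_lt hκ)))
    (Set.range (fun i => lowerBoundFormula (f (a i))) ∪
      Set.range (fun j => upperBoundFormula (f (b j))))
    (by
      rintro _ (⟨i, rfl⟩ | ⟨j, rfl⟩) _
      · exact Or.inl ⟨i, rfl⟩
      · exact Or.inr ⟨j, rfl⟩)
    (by
      intro s hs
      have hlo : {x : M | lowerBoundFormula (f x) ∈ s}.Finite :=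
        s.finite_toSet.preimage (lowerBoundFormula_injective.comp hf.1).injOn
      have hhi : {x : M | upperBoundFormula (f x) ∈ s}.Finite :=
        s.finite_toSet.preimage (upperBoundFormula_injective.comp hf.1).injOn
      obtain ⟨m, hm₁, hm₂⟩ := hM.exists_between_finsets
        (hlo.inter_of_left (Set.range a)).toFinset (hhi.inter_of_left (Set.range b)).toFinset (by
          intro x hx y hy
          rw [Set.Finite.mem_toFinset] at hx hy
          obtain ⟨i, rfl⟩ := hx.2
          obtain ⟨j, rfl⟩ := hy.2
          exact hab i j)
      refine ⟨fun _ => f m, fun ψ hψ => ?_⟩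
      rcases hs hψ with ⟨i, rfl⟩ | ⟨j, rfl⟩
      · refine (lowerBoundFormula_realize _ _).2 ((hlt _ _).2 (hm₁ _ ?_))
        rw [Set.Finite.mem_toFinset]
        exact ⟨hψ, i, rfl⟩
      · refine (upperBoundFormula_realize _ _).2 ((hlt _ _).2 (hm₂ _ ?_))
        rw [Set.Finite.mem_toFinset]
        exact ⟨hψ, j, rfl⟩)
  obtain ⟨x, hx⟩ := hf.2 (e 0)
  refine ⟨x, fun i => ?_, fun j => ?_⟩
  · rw [← hlt, hx]
    exact (lowerBoundFormula_realize _ _).1 (he _ (Or.inl ⟨i, rfl⟩))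
  · rw [← hlt, hx]
    exact (upperBoundFormula_realize _ _).1 (he _ (Or.inr ⟨j, rfl⟩))

theorem mk_formula_le (L : FirstOrder.Language.{0, 0}) (α : Type) :
    #(L.Formula α) ≤ max ℵ₀ (#α + L.card) := by
  have h₁ : #(L.Formula α) ≤ #(Σ n, L.BoundedFormula α n) :=
    mk_le_of_injective (f := fun φ => ⟨0, φ⟩)
      (sigma_mk_injective (β := fun n => L.BoundedFormula α n))
  simpa using h₁.trans BoundedFormula.card_le

theorem mk_definable_lt {N : Type} [L.Structure N] {lam : Cardinal.{0}} (hlam : ℵ₀ < lam)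
    (hL : L.card < lam) {A : Set N} (hA : #A < lam) {p : Set (ParamFormula L N 1)}
    (hp : ∀ ψ ∈ p, ∀ j, ψ.par j ∈ A) :
    #((fun (ψ : ParamFormula L N 1) => {e : N | ψ.Realize fun _ => e}) '' p) < lam := by
  have hsub : (fun (ψ : ParamFormula L N 1) => {e : N | ψ.Realize fun _ => e}) '' p ⊆
      Set.range fun χ : L.Formula (Fin 1 ⊕ A) =>
        {e : N | χ.Realize (Sum.elim (fun _ => e) Subtype.val)} := by
    rintro _ ⟨ψ, hψ, rfl⟩
    refine ⟨ψ.toFormula.relabel (Sum.map id fun j => ⟨ψ.par j, hp ψ hψ j⟩), ?_⟩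
    ext e
    rw [Set.mem_ofPred_eq, Set.mem_ofPred_eq, Formula.realize_relabel, Sum.elim_comp_map]
    rfl
  refine ((mk_le_mk_of_subset hsub).trans (mk_range_le.trans (mk_formula_le L _))).trans_lt ?_
  refine max_lt hlam (add_lt_of_lt hlam.le ?_ hL)
  rw [mk_sum, lift_id, lift_id]
  exact add_lt_of_lt hlam.le ((lt_aleph0_of_finite _).trans hlam) hA

theorem transferClause_standardTheory (T : L.Theory) {lam : Cardinal.{0}} (hlam : ℵ₀ < lam)
    (hL : L.card < lam) (kap : Cardinal.{0}) :
    TransferClause (standardTheory T) (quotientInterpretation L) (ordInterpretation L)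
      lam lam kap := by
  classical
  intro M _ N₁ S₁ g₁ N₂ S₂ g₂ hg₁ hg₂ hsat A hA p hp hfin
  have htree := isConditionTree_of_standardTheory (M := M) T
  have hfill : FillsCuts (extRel L ExtRel.lt (M := M)) lam := by
    have := model_Tdlo_of_standardTheory T (M := M)
    let _ := ordStructure L M
    obtain ⟨hbij, hlt⟩ := ordLt_of_represents hg₂
    exact fillsCuts_of_saturated (isDLOStructure_of_model M) hbij hlt hlam hsat
  have hg := isProjection_of_represents hg₁
  set g : M → N₁ := fun x => g₁ (toQuotientDom x)
  let D : ParamFormula L N₁ 1 → Set N₁ := fun ψ => {e | ψ.Realize fun _ => e}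
  have hcode : ∀ X : D '' p, ∃ c : M, ∀ y, extRel L ExtRel.con c y ↔ g y ∈ X.1 := by
    rintro ⟨_, ψ, -, rfl⟩
    exact exists_code T hg ψ.toFormula ψ.par
  choose code hcode using hcode
  obtain ⟨y, hy⟩ := htree.exists_forall_con hlam hfill (Q := Set.range code)
    (mk_range_le.trans_lt (mk_definable_lt hlam hL hA hp)) (by
      intro F hF
      have hψ : ∀ c : F, ∃ ψ ∈ p, ∀ y, extRel L ExtRel.con c.1 y ↔ ψ.Realize fun _ => g y := by
        rintro ⟨c, hc⟩
        obtain ⟨⟨_, ψ, hψ, rfl⟩, rfl⟩ := hF hc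
        exact ⟨ψ, hψ, hcode _⟩
      choose ψ hψp hψ using hψ
      obtain ⟨e, he⟩ := hfin (F.attach.image ψ) (by
        intro χ hχ
        obtain ⟨c, -, rfl⟩ := Finset.mem_image.1 (Finset.mem_coe.1 hχ)
        exact hψp c)
      obtain ⟨y, hy⟩ := hg.surjective (e 0)
      refine ⟨y, fun c hc => (hψ ⟨c, hc⟩ y).2 ?_⟩
      have : (fun _ : Fin 1 => g y) = e :=
        funext fun i => hy.trans (congrArg e (Subsingleton.elim _ _))
      rw [this]
      exact he _ (Finset.mem_image_of_mem _ (Finset.mem_attach _ _)))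
  exact ⟨fun _ => g y, fun ψ hψ => (hcode ⟨D ψ, ψ, hψ, rfl⟩ y).1 (hy _ ⟨_, rfl⟩)⟩

end Transfer

theorem card_Lext_le : Lext.card ≤ ℵ₀ := by
  have h₁ : IsEmpty (Σ n, Lext.Functions n) := ⟨fun F => Empty.elim F.2⟩
  have h₂ : Countable (Σ n, Lext.Relations n) := by
    have : Set.univ ⊆ ({⟨2, ExtRel.eqv⟩, ⟨2, ExtRel.lt⟩, ⟨2, ExtRel.pre⟩, ⟨2, ExtRel.con⟩} :
        Set (Σ n, Lext.Relations n)) := by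
      rintro ⟨_, ⟨⟩⟩ - <;> simp
    exact Set.countable_univ_iff.1 ((Set.toFinite _).countable.mono this)
  exact Cardinal.mk_le_aleph0_iff.2 (inferInstanceAs (Countable (_ ⊕ _)))

theorem theoryCard_standardTheory_le (T : L.Theory) :
    theoryCard (standardTheory T) ≤ theoryCard T := by
  have h₀ : ℵ₀ ≤ theoryCard T := self_le_add_left _ _
  have h₁ : L.card ≤ theoryCard T := (self_le_add_right _ _).trans (self_le_add_right _ _)
  have h₂ : (L.sum Lext).card ≤ theoryCard T := by
    rw [card_sum, lift_id, lift_id]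
    exact add_le_of_le h₀ h₁ (card_Lext_le.trans h₀)
  refine add_le_of_le h₀ (add_le_of_le h₀ h₂ ?_) h₀
  refine (mk_set_le _).trans ((mk_formula_le _ _).trans (max_le h₀ ?_))
  simpa using h₂

/-- `T*_ord`, the theory of dense linear orders without endpoints, is
`⊲*_λ`-maximal for every cardinal `λ > ℵ₀`. -/
theorem Tdlo_triangleStarMaximal :
    ∀ lam : Cardinal.{0}, ℵ₀ < lam → TriangleStarMaximal Tdlo lam := by
  intro lam hlam L T hT
  have hL : L.card < lam :=
    ((self_le_add_right _ _).trans (self_le_add_right _ _)).trans_lt hT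
  exact ⟨L.sum Lext, standardTheory T, quotientInterpretation L, ordInterpretation L,
    (theoryCard_standardTheory_le T).trans (self_le_add_right _ _),
    quotientInterpretation_interpretsIn T, ordInterpretation_interpretsIn T,
    jointModels_standardTheory T, transferClause_standardTheory T hlam hL 0⟩

end SopPaper
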